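/- Let {A_i}_{i=1}^∞ be compact subsets of ℝ^n that are nested, i.e. A_{i+1} ⊆ A_i for all i. Then the closed convex hull of ⋂_i A_i equals ⋂_i (closed convex hull of A_i). -/

import Mathlib

/-- closed convex hull of an intersection of nested compact sets. -/
theorem stmt17 {n : ℕ} (A : ℕ → Set (EuclideanSpace ℝ (Fin n)))
    (hcomp : ∀ i, IsCompact (A i)) (hnest : ∀ i, A (i + 1) ⊆ A i) :
    closure (convexHull ℝ (⋂ i, A i)) = ⋂ i, closure (convexHull ℝ (A i)) := by
  refine Set.Subset.antisymm
    (Set.subset_iInter fun i => closure_mono (convexHull_mono (Set.iInter_subset A i))) ?_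
  intro x hx
  by_contra hxC
  obtain ⟨f, u, hfu, hux⟩ :=
    geometric_hahn_banach_closed_point (convex_convexHull ℝ (⋂ i, A i)).closure isClosed_closure hxC
  -- The open half-space `{f < u}` contains `⋂ i, A i`, so by compactness it already contains
  -- some `A i`, whose closed convex hull then lies in `{f ≤ u}` and misses `x`.
  obtain ⟨i, hi⟩ : ∃ i, A i ⊆ {y | f y < u} :=
    exists_subset_nhds_of_isCompact (antitone_nat_of_succ_le hnest).directed_ge hcomp fun y hy =>
      (isOpen_lt f.continuous continuous_const).mem_nhds
        (hfu y (subset_closure (subset_convexHull ℝ _ hy)))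
  have hle : closure (convexHull ℝ (A i)) ⊆ {y | f y ≤ u} :=
    closure_minimal
      (convexHull_min (fun y hy => le_of_lt (show f y < u from hi hy))
        (convex_halfSpace_le f.isLinear u))
      (isClosed_le f.continuous continuous_const)
  exact hux.not_ge (hle (Set.mem_iInter.1 hx i))
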